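/- In the setting above (σ measurable and polynomially bounded, k ≥ 1, P ≥ k, Σ_n := Σ_{1-k/n}, R_{P,n} its degree-P Taylor remainder at 0, G = Σ_{i=1}^k w_i x_i + b with w_i, b i.i.d. N(0,1/n) and x uniform on {±1}^k, conditioning on the signs of the weights and bias): for any constant D > 0, there exist constants C₁, C₂ > 0 such that the conditional expectation E[|R_{P,n}(G)|·1(|G| > D)] ≤ C₁·exp(−C₂·n) for all n, uniformly over the conditioned signs. -/

import Mathlib

open MeasureTheory ProbabilityTheory Filter Finset Asymptotics
open scoped NNReal ENNReal

noncomputable section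

/-- The ±1 value encoded by a Boolean bit. -/
def bsign (b : Bool) : ℝ := if b then 1 else -1

/-- Expectation over a uniformly random point of the Boolean cube `{±1}^n`. -/
def bExp (n : ℕ) (g : (Fin n → Bool) → ℝ) : ℝ :=
  (∑ x : Fin n → Bool, g x) / 2 ^ n

/-- A function on the Boolean cube is Boolean(-valued) if it takes values in `{±1}`. -/
def IsBooleanFn {n : ℕ} (f : (Fin n → Bool) → ℝ) : Prop := ∀ x, f x = 1 ∨ f x = -1

/-- Initialization distribution: the weights `w : ℝⁿ` and the bias `b` are
iid `N(0, 1/n)` Gaussians. -/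
def initMeasure (n : ℕ) : Measure ((Fin n → ℝ) × ℝ) :=
  (Measure.pi fun _ : Fin n => gaussianReal 0 (n : ℝ≥0)⁻¹).prod (gaussianReal 0 (n : ℝ≥0)⁻¹)

/-- Initial alignment `INAL(f, σ) = E_{w,b} [ (E_x [f(x) σ(wᵀx + b)])² ]`. -/
def INAL (n : ℕ) (f : (Fin n → Bool) → ℝ) (σ : ℝ → ℝ) : ℝ :=
  ∫ θ : (Fin n → ℝ) × ℝ,
    (bExp n fun x => f x * σ (∑ i, θ.1 i * bsign (x i) + θ.2)) ^ 2 ∂ initMeasure n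

/-- The `v`-Gaussian smoothing `Σ_v(t) = E_{Y ∼ N(0,v)} [σ(Y + t)]`. -/
def gsmooth (σ : ℝ → ℝ) (v : ℝ) (t : ℝ) : ℝ :=
  ∫ y, σ (y + t) ∂ gaussianReal 0 v.toNNReal

/-- `σ` is polynomially bounded: `|σ(x)| ≤ C |x|^c + C` for some `C, c > 0`. -/
def PolyBounded (σ : ℝ → ℝ) : Prop :=
  ∃ C : ℝ, 0 < C ∧ ∃ c : ℕ, 0 < c ∧ ∀ x : ℝ, |σ x| ≤ C * |x| ^ c + C

/-- `σ` is expressive: measurable, polynomially bounded, and its Gaussian smoothing has no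
two consecutive vanishing derivatives at `0`. -/
def Expressive (σ : ℝ → ℝ) : Prop :=
  Measurable σ ∧ PolyBounded σ ∧
    ∀ m : ℕ, iteratedDeriv m (gsmooth σ 1) 0 ≠ 0 ∨ iteratedDeriv (m + 1) (gsmooth σ 1) 0 ≠ 0

/-- A nonnegative sequence is negligible if it decays faster than any inverse polynomial. -/
def Negligible (g : ℕ → ℝ) : Prop :=
  ∀ c : ℕ, Tendsto (fun n : ℕ => (n : ℝ) ^ c * g n) atTop (nhds 0)

/-- Fourier character `M_S(x) = ∏_{i ∈ S} x_i`. -/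
def chi {n : ℕ} (S : Finset (Fin n)) (x : Fin n → Bool) : ℝ := ∏ i ∈ S, bsign (x i)

/-- Fourier coefficient `f̂(S) = E_x [f(x) M_S(x)]`. -/
def fourierCoef (n : ℕ) (f : (Fin n → Bool) → ℝ) (S : Finset (Fin n)) : ℝ :=
  bExp n fun x => f x * chi S x

/-- Fourier weight up to degree `k`: `W^{≤k}(f)`. -/
def weightLE (n k : ℕ) (f : (Fin n → Bool) → ℝ) : ℝ :=
  ∑ S ∈ Finset.univ.filter (fun S : Finset (Fin n) => S.card ≤ k), fourierCoef n f S ^ 2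

/-- Fourier weight strictly below degree `k`: `W^{<k}(f)`. -/
def weightLT (n k : ℕ) (f : (Fin n → Bool) → ℝ) : ℝ :=
  ∑ S ∈ Finset.univ.filter (fun S : Finset (Fin n) => S.card < k), fourierCoef n f S ^ 2

/-- The monomial `M_k(x) = ∏_{i=1}^k x_i`, viewed as a function on `{±1}^n`. -/
def monomial (n k : ℕ) : (Fin n → Bool) → ℝ :=
  fun x => ∏ i ∈ Finset.univ.filter (fun i : Fin n => (i : ℕ) < k), bsign (x i)

/-- The `N`-extension of `f : {±1}^n → ℝ` (for `n ≤ N`): ignore the last `N - n` coordinates. -/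
def extendFn (n N : ℕ) (f : (Fin n → Bool) → ℝ) : (Fin N → Bool) → ℝ :=
  fun x => f fun i => if h : (i : ℕ) < N then x ⟨i, h⟩ else false

/-- Cross-predictability of (the uniform distribution on) the orbit of `f` under coordinate
permutations, with uniform inputs: `CP(orb(f), U^N)`. -/
def orbitCP (N : ℕ) (f : (Fin N → Bool) → ℝ) : ℝ :=
  (∑ π : Equiv.Perm (Fin N), ∑ π' : Equiv.Perm (Fin N),
      (bExp N fun x => f (fun i => x (π i)) * f (fun i => x (π' i))) ^ 2) /
    (Fintype.card (Equiv.Perm (Fin N))) ^ 2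

/-- `N = n^{1+ε}` (rounded up). -/
def Ndim (ε : ℝ) (n : ℕ) : ℕ := ⌈(n : ℝ) ^ (1 + ε)⌉₊

/-- The distribution of `(|w_1|, …, |w_k|, |b|)` is generated from `k + 1` iid `N(0, 1/n)`
variables (of which we take absolute values below). -/
def weightMeasure (n k : ℕ) : Measure ((Fin k → ℝ) × ℝ) :=
  (Measure.pi fun _ : Fin k => gaussianReal 0 (n : ℝ≥0)⁻¹).prod (gaussianReal 0 (n : ℝ≥0)⁻¹)

/-- `G = Σ_{i=1}^k τ_i |w_i| x_i + s |b|`, i.e. `Σ w_i x_i + b` conditioned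
on `sign(w_i) = τ_i` and `sign(b) = s`. -/
def Gval (k : ℕ) (τ : Fin k → ℝ) (s : ℝ) (g : (Fin k → ℝ) × ℝ) (x : Fin k → Bool) : ℝ :=
  ∑ i, τ i * |g.1 i| * bsign (x i) + s * |g.2|

/-- The conditional expectation `E[M_k(x) · F(G) | sign(w) = τ, sign(b) = s]`,
taken over `|w_1|, …, |w_k|, |b|` and uniform `x ∈ {±1}^k`. -/
def condExpFn (n k : ℕ) (τ : Fin k → ℝ) (s : ℝ) (F : ℝ → ℝ) : ℝ :=
  ∫ g : (Fin k → ℝ) × ℝ,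
    (bExp k fun x => (∏ i, bsign (x i)) * F (Gval k τ s g x)) ∂ weightMeasure n k

/-- The conditional moment `E[M_k(x) · G^ν | sign(w) = τ, sign(b) = s]`. -/
def condMoment (n k : ℕ) (τ : Fin k → ℝ) (s : ℝ) (ν : ℕ) : ℝ :=
  condExpFn n k τ s fun z => z ^ ν

/-- `s` is a sign. -/
def IsSign (s : ℝ) : Prop := s = 1 ∨ s = -1

/-- The degree-`P` Taylor remainder of the `v`-Gaussian smoothing `Σ_v` at `0`:
`R(z) = Σ_v(z) − Σ_{ν=0}^P Σ_v^{(ν)}(0)/ν! · z^ν`. -/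
def taylorRem (σ : ℝ → ℝ) (v : ℝ) (P : ℕ) (z : ℝ) : ℝ :=
  gsmooth σ v z -
    ∑ ν ∈ Finset.range (P + 1),
      iteratedDeriv ν (gsmooth σ v) 0 / (ν.factorial : ℝ) * z ^ ν

/-!
By the Cameron–Martin formula, `Σ_v(t) = ∫ σ(y) exp((t y - t² / 2) / v) dN(0, v)(y)`, which makes
sense for complex `t` and is entire in `t`. It is bounded on the unit disc uniformly for `v` in a
compact subset of `(0, ∞)`, so Cauchy's estimates bound the Taylor coefficients of `Σ_v` at `0`
and the remainder satisfies `|R(z)| ≤ A exp(b |z|)` with `A`, `b` independent of `v`. Since `|G|`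
is at most the sum `S` of `k + 1` independent variables `|N(0, 1/n)|`, Chernoff's bound
`exp(b |G|) 1(|G| > D) ≤ exp(-θ D) exp((b + θ) S)` with `θ` proportional to `n` concludes.
-/

section ParametricIntegral

variable {α E : Type*} {mα : MeasurableSpace α} {μ : Measure α}
  [NormedAddCommGroup E] [NormedSpace ℂ E] {F : ℂ → α → E} {z₀ : ℂ} {r : ℝ}

theorem aestronglyMeasurable_deriv_of_differentiableAt (hr : 0 < r)
    (hmeas : ∀ z ∈ Metric.ball z₀ r, AEStronglyMeasurable (F z) μ)
    (hdiff : ∀ᵐ a ∂μ, DifferentiableAt ℂ (F · a) z₀) :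
    AEStronglyMeasurable (fun a ↦ deriv (F · a) z₀) μ := by
  obtain ⟨u, -, hu_mem, hu_lim⟩ := exists_seq_strictAnti_tendsto' hr
  have hu_ne (n : ℕ) : (u n : ℂ) ≠ 0 := by exact_mod_cast (hu_mem n).1.ne'
  have hu_punctured : Tendsto (fun n ↦ (u n : ℂ)) atTop (nhdsWithin 0 {0}ᶜ) :=
    tendsto_nhdsWithin_iff.2
      ⟨by exact_mod_cast (Complex.continuous_ofReal.tendsto 0).comp hu_lim, .of_forall hu_ne⟩
  have hshift (n : ℕ) : z₀ + u n ∈ Metric.ball z₀ r := by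
    simpa [abs_of_pos (hu_mem n).1] using (hu_mem n).2
  refine aestronglyMeasurable_of_tendsto_ae atTop
    (f := fun n a ↦ (u n : ℂ)⁻¹ • (F (z₀ + u n) a - F z₀ a))
    (fun n ↦ ((hmeas _ (hshift n)).sub (hmeas _ (Metric.mem_ball_self hr))).const_smul _) ?_
  filter_upwards [hdiff] with a ha
  exact ha.hasDerivAt.tendsto_slope_zero.comp hu_punctured

/-- Cauchy's estimate turns the bound on the integrand into one on its derivative. -/
theorem differentiableAt_integral_of_norm_le {bound : α → ℝ} (hr : 0 < r)
    (hmeas : ∀ z ∈ Metric.ball z₀ r, AEStronglyMeasurable (F z) μ)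
    (hdiff : ∀ᵐ a ∂μ, DifferentiableOn ℂ (F · a) (Metric.ball z₀ r))
    (hle : ∀ᵐ a ∂μ, ∀ z ∈ Metric.ball z₀ r, ‖F z a‖ ≤ bound a)
    (hbound : Integrable bound μ) :
    DifferentiableAt ℂ (fun z ↦ ∫ a, F z a ∂μ) z₀ := by
  have hsub : Metric.ball z₀ (r / 2) ⊆ Metric.ball z₀ r :=
    Metric.ball_subset_ball (half_le_self hr.le)
  have hcenter : z₀ ∈ Metric.ball z₀ r := Metric.mem_ball_self hr
  have hdiffAt : ∀ᵐ a ∂μ, ∀ z ∈ Metric.ball z₀ r, DifferentiableAt ℂ (F · a) z := by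
    filter_upwards [hdiff] with a ha z hz
    exact ha.differentiableAt (Metric.isOpen_ball.mem_nhds hz)
  have hcauchy : ∀ᵐ a ∂μ, ∀ z ∈ Metric.ball z₀ (r / 2),
      ‖deriv (F · a) z‖ ≤ bound a / (r / 2) := by
    filter_upwards [hdiff, hle] with a ha hle_a z hz
    have hdisc : Metric.closedBall z (r / 2) ⊆ Metric.ball z₀ r :=
      Metric.closedBall_subset_ball' (by linarith [Metric.mem_ball.1 hz])
    exact Complex.norm_deriv_le_of_forall_mem_sphere_norm_le (half_pos hr)
      ((ha.mono hdisc).diffContOnCl_ball le_rfl)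
      fun w hw ↦ hle_a w (hdisc (Metric.sphere_subset_closedBall hw))
  refine (hasDerivAt_integral_of_dominated_loc_of_deriv_le
    (F' := fun z a ↦ deriv (F · a) z) (Metric.ball_mem_nhds z₀ (half_pos hr))
    (eventually_of_mem (Metric.ball_mem_nhds z₀ hr) hmeas)
    (hbound.mono' (hmeas z₀ hcenter) (hle.mono fun a ha ↦ ha z₀ hcenter))
    (aestronglyMeasurable_deriv_of_differentiableAt hr hmeas
      (hdiffAt.mono fun a ha ↦ ha z₀ hcenter))
    hcauchy (hbound.div_const _) ?_).2.differentiableAt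
  filter_upwards [hdiffAt] with a ha z hz
  exact (ha z (hsub hz)).hasDerivAt

end ParametricIntegral

theorem iteratedDeriv_re_comp_ofReal {f : ℂ → ℂ} (hf : Differentiable ℂ f) (n : ℕ) (x : ℝ) :
    iteratedDeriv n (fun t : ℝ ↦ (f t).re) x = (iteratedDeriv n f x).re := by
  induction n generalizing f with
  | zero => simp
  | succ n ih =>
    have hderiv : deriv (fun t : ℝ ↦ (f t).re) = fun t : ℝ ↦ (deriv f t).re :=
      funext fun t ↦ (hf t).hasDerivAt.real_of_complex.deriv
    rw [iteratedDeriv_succ', iteratedDeriv_succ', hderiv, ih hf.deriv]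

section Gaussian

theorem integrable_exp_mul_abs_gaussianReal (t : ℝ) (v : ℝ≥0) :
    Integrable (fun x ↦ Real.exp (t * |x|)) (gaussianReal 0 v) :=
  integrable_exp_mul_abs (integrable_exp_mul_gaussianReal t) (integrable_exp_mul_gaussianReal (-t))

theorem integral_exp_mul_abs_gaussianReal_le (t : ℝ) (v : ℝ≥0) :
    ∫ x, Real.exp (t * |x|) ∂gaussianReal 0 v ≤ 2 * Real.exp (v * t ^ 2 / 2) := by
  have hmgf (u : ℝ) : ∫ x, Real.exp (u * x) ∂gaussianReal 0 v = Real.exp (v * u ^ 2 / 2) := by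
    simpa [mgf] using congrFun (mgf_id_gaussianReal (μ := 0) (v := v)) u
  have hle (x : ℝ) : Real.exp (t * |x|) ≤ Real.exp (t * x) + Real.exp (-t * x) := by
    rcases abs_choice x with h | h <;> rw [h]
    · exact le_add_of_nonneg_right (Real.exp_pos _).le
    · rw [mul_neg, ← neg_mul]
      exact le_add_of_nonneg_left (Real.exp_pos _).le
  calc ∫ x, Real.exp (t * |x|) ∂gaussianReal 0 v
      ≤ ∫ x, (Real.exp (t * x) + Real.exp (-t * x)) ∂gaussianReal 0 v :=
        integral_mono (integrable_exp_mul_abs_gaussianReal t v)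
          ((integrable_exp_mul_gaussianReal t).add (integrable_exp_mul_gaussianReal (-t))) hle
    _ = 2 * Real.exp (v * t ^ 2 / 2) := by
        rw [integral_add (integrable_exp_mul_gaussianReal t) (integrable_exp_mul_gaussianReal (-t)),
          hmgf, hmgf, neg_sq, two_mul]

theorem gaussianPDFReal_eq_exp_mul (m : ℝ) (v : ℝ≥0) (x : ℝ) :
    gaussianPDFReal m v x = Real.exp ((m * x - m ^ 2 / 2) / v) * gaussianPDFReal 0 v x := by
  rw [gaussianPDFReal, gaussianPDFReal, mul_left_comm, ← Real.exp_add]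
  congr 2
  rcases eq_or_ne v 0 with rfl | hv
  · simp
  · field_simp
    ring

theorem integral_gaussianReal_eq_integral_exp_mul (f : ℝ → ℝ) (m : ℝ) {v : ℝ≥0} (hv : v ≠ 0) :
    ∫ x, f x ∂gaussianReal m v =
      ∫ x, f x * Real.exp ((m * x - m ^ 2 / 2) / v) ∂gaussianReal 0 v := by
  rw [integral_gaussianReal_eq_integral_smul hv, integral_gaussianReal_eq_integral_smul hv]
  congr with x
  rw [gaussianPDFReal_eq_exp_mul, smul_eq_mul, smul_eq_mul]
  ring

end Gaussian

theorem nonneg_of_abs_le_mul_exp {f : ℝ → ℝ} {A b : ℝ}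
    (hf : ∀ x, |f x| ≤ A * Real.exp (b * |x|)) : 0 ≤ A := by
  simpa using (abs_nonneg _).trans (hf 0)

section Smoothing

theorem gsmooth_eq_integral_gaussianReal (σ : ℝ → ℝ) (v t : ℝ) :
    gsmooth σ v t = ∫ y, σ y ∂gaussianReal t v.toNNReal := by
  have hmap := gaussianReal_map_add_const (μ := 0) (v := v.toNNReal) t
  rw [zero_add] at hmap
  rw [← hmap, (measurableEmbedding_addRight t).integral_map, gsmooth]

/-- The entire extension of the Gaussian smoothing `gsmooth σ v`. By the Cameron–Martin formula
the shift by `z` is moved from `σ` into an exponential density with respect to `N(0, v)`, so the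
variable `z` only enters through an entire function. -/
def complexGsmooth (σ : ℝ → ℝ) (v : ℝ) (z : ℂ) : ℂ :=
  ∫ y : ℝ, (σ y : ℂ) * Complex.exp ((z * y - z ^ 2 / 2) / v) ∂gaussianReal 0 v.toNNReal

variable {σ : ℝ → ℝ} {M a v : ℝ}

theorem gsmooth_eq_re_complexGsmooth (σ : ℝ → ℝ) (hv : 0 < v) (t : ℝ) :
    gsmooth σ v t = (complexGsmooth σ v t).re := by
  have hintegrand (y : ℝ) : (σ y : ℂ) * Complex.exp (((t : ℂ) * y - (t : ℂ) ^ 2 / 2) / v) =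
      ((σ y * Real.exp ((t * y - t ^ 2 / 2) / v) : ℝ) : ℂ) := by
    push_cast
    rfl
  simp only [complexGsmooth, hintegrand]
  rw [integral_complex_ofReal, Complex.ofReal_re, gsmooth_eq_integral_gaussianReal,
    integral_gaussianReal_eq_integral_exp_mul σ t (by simpa using hv), Real.coe_toNNReal v hv.le]

theorem norm_complexGsmooth_integrand_le (hσ : ∀ x, |σ x| ≤ M * Real.exp (a * |x|))
    (hv : 0 < v) (y : ℝ) {z : ℂ} {R : ℝ} (hz : ‖z‖ ≤ R) :
    ‖(σ y : ℂ) * Complex.exp ((z * y - z ^ 2 / 2) / v)‖ ≤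
      M * Real.exp (R ^ 2 / (2 * v)) * Real.exp ((a + R / v) * |y|) := by
  have hexponent : ‖(z * y - z ^ 2 / 2) / v‖ ≤ (R * |y| + R ^ 2 / 2) / v := by
    rw [norm_div, Complex.norm_real, Real.norm_of_nonneg hv.le]
    gcongr
    refine (norm_sub_le _ _).trans ?_
    rw [norm_mul, norm_div, norm_pow, Complex.norm_real, Real.norm_eq_abs, Complex.norm_two]
    gcongr
  have hM : 0 ≤ M := nonneg_of_abs_le_mul_exp hσ
  calc ‖(σ y : ℂ) * Complex.exp ((z * y - z ^ 2 / 2) / v)‖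
      = |σ y| * ‖Complex.exp ((z * y - z ^ 2 / 2) / v)‖ := by
        rw [norm_mul, Complex.norm_real, Real.norm_eq_abs]
    _ ≤ M * Real.exp (a * |y|) * Real.exp ((R * |y| + R ^ 2 / 2) / v) := by
        gcongr
        · exact hσ y
        · exact (Complex.norm_exp_le_exp_norm _).trans (Real.exp_le_exp.2 hexponent)
    _ = M * Real.exp (R ^ 2 / (2 * v)) * Real.exp ((a + R / v) * |y|) := by
        rw [mul_assoc, mul_assoc, ← Real.exp_add, ← Real.exp_add]
        ring_nf

theorem differentiable_complexGsmooth (hmeas : Measurable σ)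
    (hσ : ∀ x, |σ x| ≤ M * Real.exp (a * |x|)) (hv : 0 < v) :
    Differentiable ℂ (complexGsmooth σ v) := fun z₀ ↦
  differentiableAt_integral_of_norm_le one_pos
    (fun z _ ↦ Measurable.aestronglyMeasurable (by fun_prop))
    (.of_forall fun y ↦ by fun_prop)
    (.of_forall fun y z hz ↦ norm_complexGsmooth_integrand_le hσ hv y (R := ‖z₀‖ + 1)
      (norm_lt_of_mem_ball hz).le)
    ((integrable_exp_mul_abs_gaussianReal _ _).const_mul _)

theorem norm_complexGsmooth_le (hσ : ∀ x, |σ x| ≤ M * Real.exp (a * |x|)) (hv : 0 < v) (z : ℂ) :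
    ‖complexGsmooth σ v z‖ ≤ 2 * M * Real.exp (v * a ^ 2 / 2 + a * ‖z‖ + ‖z‖ ^ 2 / v) := by
  have hM : 0 ≤ M := nonneg_of_abs_le_mul_exp hσ
  calc ‖complexGsmooth σ v z‖
      ≤ ∫ y, M * Real.exp (‖z‖ ^ 2 / (2 * v)) * Real.exp ((a + ‖z‖ / v) * |y|)
          ∂gaussianReal 0 v.toNNReal :=
        norm_integral_le_of_norm_le ((integrable_exp_mul_abs_gaussianReal _ _).const_mul _)
          (.of_forall fun y ↦ norm_complexGsmooth_integrand_le hσ hv y le_rfl)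
    _ ≤ M * Real.exp (‖z‖ ^ 2 / (2 * v)) * (2 * Real.exp (v * (a + ‖z‖ / v) ^ 2 / 2)) := by
        rw [integral_const_mul]
        gcongr
        simpa only [Real.coe_toNNReal v hv.le] using
          integral_exp_mul_abs_gaussianReal_le (a + ‖z‖ / v) v.toNNReal
    _ = 2 * M * Real.exp (v * a ^ 2 / 2 + a * ‖z‖ + ‖z‖ ^ 2 / v) := by
        rw [mul_left_comm, ← mul_assoc, mul_assoc, mul_assoc, ← Real.exp_add, mul_assoc]
        congr 3
        field_simp
        ring

theorem abs_gsmooth_le (ha : 0 ≤ a) (hσ : ∀ x, |σ x| ≤ M * Real.exp (a * |x|)) (hv : 0 ≤ v)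
    (t : ℝ) : |gsmooth σ v t| ≤ 2 * M * Real.exp (v * a ^ 2 / 2) * Real.exp (a * |t|) := by
  have hM : 0 ≤ M := nonneg_of_abs_le_mul_exp hσ
  have hshift (y : ℝ) : ‖σ (y + t)‖ ≤ M * Real.exp (a * |t|) * Real.exp (a * |y|) := by
    rw [mul_assoc, ← Real.exp_add, ← mul_add, add_comm |t|]
    exact (hσ _).trans (by gcongr; exact abs_add_le y t)
  calc |gsmooth σ v t|
      ≤ ∫ y, M * Real.exp (a * |t|) * Real.exp (a * |y|) ∂gaussianReal 0 v.toNNReal :=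
        norm_integral_le_of_norm_le ((integrable_exp_mul_abs_gaussianReal _ _).const_mul _)
          (.of_forall hshift)
    _ ≤ M * Real.exp (a * |t|) * (2 * Real.exp (v * a ^ 2 / 2)) := by
        rw [integral_const_mul]
        gcongr
        simpa only [Real.coe_toNNReal v hv] using
          integral_exp_mul_abs_gaussianReal_le a v.toNNReal
    _ = 2 * M * Real.exp (v * a ^ 2 / 2) * Real.exp (a * |t|) := by ring

theorem abs_iteratedDeriv_gsmooth_zero_le (hmeas : Measurable σ)
    (hσ : ∀ x, |σ x| ≤ M * Real.exp (a * |x|)) (hv : 0 < v) {R : ℝ} (hR : 0 < R) (ν : ℕ) :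
    |iteratedDeriv ν (gsmooth σ v) 0| ≤
      ν.factorial * (2 * M * Real.exp (v * a ^ 2 / 2 + a * R + R ^ 2 / v)) / R ^ ν := by
  have hdiff := differentiable_complexGsmooth hmeas hσ hv
  rw [funext (gsmooth_eq_re_complexGsmooth σ hv), iteratedDeriv_re_comp_ofReal hdiff,
    Complex.ofReal_zero]
  refine (Complex.abs_re_le_norm _).trans
    (Complex.norm_iteratedDeriv_le_of_forall_mem_sphere_norm_le ν hR hdiff.diffContOnCl
      fun z hz ↦ ?_)
  simpa only [mem_sphere_zero_iff_norm.1 hz] using norm_complexGsmooth_le hσ hv z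

theorem abs_taylorRem_le (hmeas : Measurable σ) (ha : 0 ≤ a)
    (hσ : ∀ x, |σ x| ≤ M * Real.exp (a * |x|)) (hv : 0 < v) (P : ℕ) (z : ℝ) :
    |taylorRem σ v P z| ≤
      2 * M * Real.exp (v * a ^ 2 / 2 + a + 1 / v) * (1 + ∑ ν ∈ range (P + 1), (ν.factorial : ℝ)) *
        Real.exp ((a + 1) * |z|) := by
  set B := 2 * M * Real.exp (v * a ^ 2 / 2 + a + 1 / v) with hB
  have hM : 0 ≤ M := nonneg_of_abs_le_mul_exp hσ
  have hsmooth : |gsmooth σ v z| ≤ B * Real.exp ((a + 1) * |z|) := by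
    refine (abs_gsmooth_le ha hσ hv.le z).trans ?_
    rw [hB]
    gcongr
    · have := one_div_pos.2 hv
      linarith
    · linarith
  have hterm (ν : ℕ) : |iteratedDeriv ν (gsmooth σ v) 0 / ν.factorial * z ^ ν| ≤
      B * ν.factorial * Real.exp ((a + 1) * |z|) := by
    have hcoef : |iteratedDeriv ν (gsmooth σ v) 0| / ν.factorial ≤ B := by
      rw [div_le_iff₀' (by positivity)]
      simpa [hB] using abs_iteratedDeriv_gsmooth_zero_le hmeas hσ hv one_pos ν
    have hpow : |z| ^ ν ≤ ν.factorial * Real.exp ((a + 1) * |z|) := by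
      rw [← div_le_iff₀' (by positivity)]
      refine (Real.pow_div_factorial_le_exp _ (abs_nonneg z) ν).trans (Real.exp_le_exp.2 ?_)
      exact le_mul_of_one_le_left (abs_nonneg z) (by linarith)
    rw [abs_mul, abs_div, abs_pow, Nat.abs_cast, mul_assoc B]
    gcongr
  calc |taylorRem σ v P z|
      ≤ |gsmooth σ v z| +
          ∑ ν ∈ range (P + 1), |iteratedDeriv ν (gsmooth σ v) 0 / ν.factorial * z ^ ν| :=
        (abs_sub _ _).trans (add_le_add_right (abs_sum_le_sum_abs _ _) _)
    _ ≤ B * Real.exp ((a + 1) * |z|) +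
          ∑ ν ∈ range (P + 1), B * ν.factorial * Real.exp ((a + 1) * |z|) := by
        gcongr
        exact hterm _
    _ = B * (1 + ∑ ν ∈ range (P + 1), (ν.factorial : ℝ)) * Real.exp ((a + 1) * |z|) := by
        rw [← sum_mul, ← mul_sum]
        ring

theorem exists_abs_taylorRem_le_of_mem_Icc (hmeas : Measurable σ) (hM : 0 < M) (ha : 0 ≤ a)
    (hσ : ∀ x, |σ x| ≤ M * Real.exp (a * |x|)) {v₀ : ℝ} (hv₀ : 0 < v₀) (v₁ : ℝ) (P : ℕ) :
    ∃ A, 0 < A ∧ ∀ v ∈ Set.Icc v₀ v₁, ∀ z,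
      |taylorRem σ v P z| ≤ A * Real.exp ((a + 1) * |z|) := by
  refine ⟨2 * M * Real.exp (v₁ * a ^ 2 / 2 + a + 1 / v₀) *
    (1 + ∑ ν ∈ range (P + 1), (ν.factorial : ℝ)), by positivity, fun v hv z ↦ ?_⟩
  refine (abs_taylorRem_le hmeas ha hσ (hv₀.trans_le hv.1) P z).trans ?_
  gcongr
  exacts [hv.2, hv.1]

end Smoothing

theorem PolyBounded.exists_abs_le_exp {σ : ℝ → ℝ} (hσ : PolyBounded σ) :
    ∃ M, 0 < M ∧ ∀ x, |σ x| ≤ M * Real.exp (1 * |x|) := by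
  obtain ⟨C, hC, c, -, hσ⟩ := hσ
  refine ⟨C * (c.factorial + 1), by positivity, fun x ↦ ?_⟩
  have hpow : |x| ^ c ≤ c.factorial * Real.exp |x| :=
    (div_le_iff₀' (by positivity)).1 (Real.pow_div_factorial_le_exp _ (abs_nonneg x) c)
  calc |σ x| ≤ C * |x| ^ c + C * 1 := by simpa using hσ x
    _ ≤ C * (c.factorial * Real.exp |x|) + C * Real.exp |x| := by
        gcongr
        exact Real.one_le_exp (abs_nonneg x)
    _ = C * (c.factorial + 1) * Real.exp (1 * |x|) := by ring_nf

section Tail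

variable {n k : ℕ}

theorem bExp_nonneg {f : (Fin n → Bool) → ℝ} (hf : ∀ x, 0 ≤ f x) : 0 ≤ bExp n f :=
  div_nonneg (sum_nonneg fun x _ ↦ hf x) (by positivity)

theorem bExp_le_of_forall_le {f : (Fin n → Bool) → ℝ} {c : ℝ} (hf : ∀ x, f x ≤ c) :
    bExp n f ≤ c := by
  rw [bExp, div_le_iff₀' (by positivity)]
  simpa using sum_le_card_nsmul univ f c fun x _ ↦ hf x

theorem abs_bsign (b : Bool) : |bsign b| = 1 := by
  cases b <;> simp [bsign]

theorem IsSign.abs_eq_one {s : ℝ} (hs : IsSign s) : |s| = 1 := by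
  rcases hs with rfl | rfl <;> simp

theorem abs_Gval_le {τ : Fin k → ℝ} (hτ : ∀ i, |τ i| ≤ 1) {s : ℝ} (hs : |s| ≤ 1)
    (g : (Fin k → ℝ) × ℝ) (x : Fin k → Bool) :
    |Gval k τ s g x| ≤ ∑ i, |g.1 i| + |g.2| := by
  refine (abs_add_le _ _).trans (add_le_add ((abs_sum_le_sum_abs _ _).trans
    (sum_le_sum fun i _ ↦ ?_)) ?_)
  · rw [abs_mul, abs_mul, abs_bsign, mul_one, abs_abs]
    exact mul_le_of_le_one_left (abs_nonneg _) (hτ i)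
  · rw [abs_mul, abs_abs]
    exact mul_le_of_le_one_left (abs_nonneg _) hs

theorem exp_mul_sum_abs_add_abs (t : ℝ) (g : (Fin k → ℝ) × ℝ) :
    Real.exp (t * (∑ i, |g.1 i| + |g.2|)) =
      (∏ i, Real.exp (t * |g.1 i|)) * Real.exp (t * |g.2|) := by
  rw [mul_add, Real.exp_add, mul_sum, Real.exp_sum]

theorem integrable_exp_mul_sum_abs_weightMeasure (n k : ℕ) (t : ℝ) :
    Integrable (fun g ↦ Real.exp (t * (∑ i, |g.1 i| + |g.2|))) (weightMeasure n k) := by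
  simp only [exp_mul_sum_abs_add_abs]
  exact Integrable.mul_prod
    (Integrable.fintype_prod (f := fun _ x ↦ Real.exp (t * |x|))
      fun _ ↦ integrable_exp_mul_abs_gaussianReal t _)
    (integrable_exp_mul_abs_gaussianReal t _)

theorem integral_exp_mul_sum_abs_weightMeasure_le (n k : ℕ) (t : ℝ) :
    ∫ g, Real.exp (t * (∑ i, |g.1 i| + |g.2|)) ∂weightMeasure n k ≤
      (2 * Real.exp (t ^ 2 / (2 * n))) ^ (k + 1) := by
  simp only [exp_mul_sum_abs_add_abs, weightMeasure]
  rw [integral_prod_mul (fun w : Fin k → ℝ ↦ ∏ i, Real.exp (t * |w i|)) fun b ↦ Real.exp (t * |b|),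
    integral_fintype_prod_eq_prod (fun _ x ↦ Real.exp (t * |x|)), prod_const, card_univ,
    Fintype.card_fin, ← pow_succ]
  gcongr
  exact (integral_exp_mul_abs_gaussianReal_le t _).trans_eq (by push_cast; ring_nf)

variable {F : ℝ → ℝ} {A b D : ℝ} {τ : Fin k → ℝ} {s : ℝ}

theorem abs_mul_ite_lt_abs_le_exp (hF : ∀ z, |F z| ≤ A * Real.exp (b * |z|)) {θ : ℝ}
    (hθ : 0 ≤ θ) (z : ℝ) :
    |F z| * (if D < |z| then 1 else 0) ≤
      A * Real.exp (-(θ * D)) * Real.exp ((b + θ) * |z|) := by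
  have hA : 0 ≤ A := nonneg_of_abs_le_mul_exp hF
  split_ifs with hz
  · rw [mul_one, mul_assoc, ← Real.exp_add]
    refine (hF z).trans ?_
    gcongr
    linarith [mul_le_mul_of_nonneg_left hz.le hθ]
  · rw [mul_zero]
    positivity

theorem integral_bExp_tail_le_of_nonneg (hF : ∀ z, |F z| ≤ A * Real.exp (b * |z|)) (hb : 0 ≤ b)
    (hτ : ∀ i, |τ i| ≤ 1) (hs : |s| ≤ 1) {θ : ℝ} (hθ : 0 ≤ θ) :
    ∫ g, (bExp k fun x ↦ |F (Gval k τ s g x)| * (if D < |Gval k τ s g x| then (1 : ℝ) else 0))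
        ∂weightMeasure n k ≤
      A * Real.exp (-(θ * D)) * (2 * Real.exp ((b + θ) ^ 2 / (2 * n))) ^ (k + 1) := by
  have hA : 0 ≤ A := nonneg_of_abs_le_mul_exp hF
  have hpointwise (g : (Fin k → ℝ) × ℝ) :
      (bExp k fun x ↦ |F (Gval k τ s g x)| * (if D < |Gval k τ s g x| then (1 : ℝ) else 0)) ≤
        A * Real.exp (-(θ * D)) * Real.exp ((b + θ) * (∑ i, |g.1 i| + |g.2|)) :=
    bExp_le_of_forall_le fun x ↦ (abs_mul_ite_lt_abs_le_exp hF hθ _).trans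
      (by gcongr; exact abs_Gval_le hτ hs g x)
  refine (integral_mono_of_nonneg
    (.of_forall fun g ↦ bExp_nonneg fun x ↦ mul_nonneg (abs_nonneg _) (by positivity))
    ((integrable_exp_mul_sum_abs_weightMeasure n k (b + θ)).const_mul _)
    (.of_forall hpointwise)).trans ?_
  rw [integral_const_mul]
  gcongr
  exact integral_exp_mul_sum_abs_weightMeasure_le n k (b + θ)

theorem chernoff_exponent_le {m N : ℝ} (hm : 0 < m) (hN : 1 ≤ N) (b D : ℝ) :
    m * ((b + N * (D / (2 * m))) ^ 2 / (2 * N)) - N * (D / (2 * m)) * D ≤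
      m * b ^ 2 - D ^ 2 / (4 * m) * N := by
  set η := D / (2 * m) with hη
  have hD : D = 2 * m * η := by rw [hη]; field_simp
  have hsq : (b + N * η) ^ 2 / (2 * N) ≤ b ^ 2 + N * η ^ 2 := by
    rw [div_le_iff₀ (by positivity)]
    nlinarith [sq_nonneg (b - N * η), mul_nonneg (sub_nonneg.2 hN) (sq_nonneg b)]
  have hrate : D ^ 2 / (4 * m) = m * η ^ 2 := by rw [hD]; field_simp; ring
  rw [hrate, hD]
  linarith [mul_le_mul_of_nonneg_left hsq hm.le]

/-- The choice `θ = n D / (2 (k + 1))` minimises the Chernoff exponent after the estimate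
`(b + θ) ^ 2 ≤ 2 * b ^ 2 + 2 * θ ^ 2`. -/
theorem integral_bExp_tail_le (hF : ∀ z, |F z| ≤ A * Real.exp (b * |z|)) (hb : 0 ≤ b)
    (hD : 0 ≤ D) (hn : n ≠ 0) (hτ : ∀ i, |τ i| ≤ 1) (hs : |s| ≤ 1) :
    ∫ g, (bExp k fun x ↦ |F (Gval k τ s g x)| * (if D < |Gval k τ s g x| then (1 : ℝ) else 0))
        ∂weightMeasure n k ≤
      A * 2 ^ (k + 1) * Real.exp ((k + 1) * b ^ 2) *
        Real.exp (-(D ^ 2 / (4 * (k + 1))) * n) := by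
  have hA : 0 ≤ A := nonneg_of_abs_le_mul_exp hF
  have hexponent := chernoff_exponent_le (m := k + 1) (by positivity)
    (Nat.one_le_cast.2 (Nat.one_le_iff_ne_zero.2 hn)) b D
  set θ : ℝ := n * (D / (2 * (k + 1)))
  calc ∫ g, (bExp k fun x ↦ |F (Gval k τ s g x)| *
        (if D < |Gval k τ s g x| then (1 : ℝ) else 0)) ∂weightMeasure n k
      ≤ A * Real.exp (-(θ * D)) * (2 * Real.exp ((b + θ) ^ 2 / (2 * n))) ^ (k + 1) :=
        integral_bExp_tail_le_of_nonneg hF hb hτ hs (by positivity)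
    _ = A * 2 ^ (k + 1) * Real.exp ((k + 1) * ((b + θ) ^ 2 / (2 * n)) - θ * D) := by
        rw [mul_pow, ← Real.exp_nat_mul, sub_eq_add_neg, Real.exp_add]
        push_cast
        ring
    _ ≤ A * 2 ^ (k + 1) * Real.exp ((k + 1) * b ^ 2 - D ^ 2 / (4 * (k + 1)) * n) := by
        gcongr
    _ = A * 2 ^ (k + 1) * Real.exp ((k + 1) * b ^ 2) *
          Real.exp (-(D ^ 2 / (4 * (k + 1))) * n) := by
        rw [mul_assoc _ (Real.exp _), ← Real.exp_add, neg_mul, ← sub_eq_add_neg]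

end Tail

theorem one_sub_div_mem_Icc {x y : ℝ} (hx : 0 ≤ x) (hxy : 2 * x ≤ y) :
    1 - x / y ∈ Set.Icc (1 / 2 : ℝ) 1 := by
  have hy : 0 ≤ y := by linarith
  have hhalf : x / y ≤ 1 / 2 := div_le_of_le_mul₀ hy (by norm_num) (by linarith)
  constructor <;> linarith [div_nonneg hx hy]

theorem remainder_tail_region_general {σ : ℝ → ℝ} (hmeas : Measurable σ) {M a : ℝ} (hM : 0 < M)
    (ha : 0 ≤ a) (hσ : ∀ x, |σ x| ≤ M * Real.exp (a * |x|)) {v₀ : ℝ} (hv₀ : 0 < v₀) (v₁ : ℝ)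
    (k P : ℕ) {D : ℝ} (hD : 0 < D) :
    ∃ C₁ : ℝ, 0 < C₁ ∧ ∃ C₂ : ℝ, 0 < C₂ ∧ ∀ v ∈ Set.Icc v₀ v₁, ∀ n : ℕ, n ≠ 0 →
      ∀ τ : Fin k → ℝ, (∀ i, IsSign (τ i)) → ∀ s : ℝ, IsSign s →
        (∫ g : (Fin k → ℝ) × ℝ,
            (bExp k fun x ↦
              |taylorRem σ v P (Gval k τ s g x)| *
                (if D < |Gval k τ s g x| then (1 : ℝ) else 0)) ∂weightMeasure n k) ≤
          C₁ * Real.exp (-C₂ * n) := by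
  obtain ⟨A, hA, hrem⟩ := exists_abs_taylorRem_le_of_mem_Icc hmeas hM ha hσ hv₀ v₁ P
  refine ⟨A * 2 ^ (k + 1) * Real.exp ((k + 1) * (a + 1) ^ 2), by positivity,
    D ^ 2 / (4 * (k + 1)), by positivity, fun v hv n hn τ hτ s hs ↦ ?_⟩
  exact integral_bExp_tail_le (hrem v hv) (by positivity) hD.le hn
    (fun i ↦ (hτ i).abs_eq_one.le) hs.abs_eq_one.le

/-- Tail part of the remainder: for any constant `D > 0`, there exist
`C₁, C₂ > 0` such that, conditionally on any fixed signs,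
`E[|R_{P,n}(G)| · 1(|G| > D)] ≤ C₁ exp(−C₂ n)`, uniformly over the signs. -/
theorem remainder_tail_region
    (σ : ℝ → ℝ) (hmeas : Measurable σ) (hpb : PolyBounded σ)
    (k P : ℕ) (hk : 1 ≤ k) (hkP : k ≤ P) (D : ℝ) (hD : 0 < D) :
    ∃ C₁ : ℝ, 0 < C₁ ∧ ∃ C₂ : ℝ, 0 < C₂ ∧ ∀ n : ℕ, 2 * k ≤ n →
      ∀ τ : Fin k → ℝ, (∀ i, IsSign (τ i)) → ∀ s : ℝ, IsSign s →
        (∫ g : (Fin k → ℝ) × ℝ,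
            (bExp k fun x =>
              |taylorRem σ (1 - (k : ℝ) / n) P (Gval k τ s g x)| *
                (if D < |Gval k τ s g x| then (1 : ℝ) else 0)) ∂ weightMeasure n k) ≤
          C₁ * Real.exp (-C₂ * n) := by
  obtain ⟨M, hM, hσ⟩ := hpb.exists_abs_le_exp
  obtain ⟨C₁, hC₁, C₂, hC₂, htail⟩ :=
    remainder_tail_region_general hmeas hM zero_le_one hσ one_half_pos 1 k P hD
  exact ⟨C₁, hC₁, C₂, hC₂, fun n hn ↦
    htail _ (one_sub_div_mem_Icc k.cast_nonneg (by exact_mod_cast hn)) n (by lia)⟩
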